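/- arXiv:2102.12931 — 2 statements merged into one kernel-verified Lean document; each statement's English description precedes it below -/
import Mathlib

section
/- Let S be a finite Boolean inverse monoid. Then there are finite groups G₁, …, G_r and natural numbers n₁, …, n_r such that S is isomorphic to the direct product M_{n₁}(G₁⁰) × ⋯ × M_{n_r}(G_r⁰) of Boolean inverse monoids of generalized rook matrices. -/
namespace Paper

/-- An inverse semigroup with zero: an associative multiplication, a zero that is
absorbing, and a map `⁻¹` sending each element to its unique generalized inverse. -/
class IsInverseSemigroup (S : Type*) [Mul S] [Zero S] [Inv S] : Prop where
  mul_assoc : ∀ a b c : S, a * b * c = a * (b * c)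
  mul_inv_mul : ∀ a : S, a * a⁻¹ * a = a
  inv_mul_inv : ∀ a : S, a⁻¹ * a * a⁻¹ = a⁻¹
  inv_unique : ∀ a b : S, a * b * a = a → b * a * b = b → b = a⁻¹
  zero_mul : ∀ a : S, 0 * a = 0
  mul_zero : ∀ a : S, a * 0 = 0

variable {S : Type*} [Mul S] [Zero S] [Inv S]

/-- The natural partial order: `a ≤ b` iff `a = b * a⁻¹ * a`. -/
def nle (a b : S) : Prop := a = b * a⁻¹ * a

/-- `e` is an idempotent. -/
def idem (e : S) : Prop := e * e = e

/-- `a` and `b` are compatible. -/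
def compat (a b : S) : Prop := idem (a⁻¹ * b) ∧ idem (a * b⁻¹)

/-- `a` and `b` are orthogonal. -/
def orth (a b : S) : Prop := a⁻¹ * b = 0 ∧ a * b⁻¹ = 0

/-- `j` is the least upper bound of `a` and `b` for the natural partial order. -/
def isJoin (a b j : S) : Prop :=
  nle a j ∧ nle b j ∧ ∀ c : S, nle a c → nle b c → nle j c

/-- `m` is the greatest lower bound of `a` and `b` for the natural partial order. -/
def isMeet (a b m : S) : Prop :=
  nle m a ∧ nle m b ∧ ∀ c : S, nle c a → nle c b → nle c m

/-- `a` is an atom: a nonzero element with nothing strictly between it and `0`. -/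
def isAtomElem (a : S) : Prop := a ≠ 0 ∧ ∀ x : S, nle x a → x = a ∨ x = 0

/-- `s` is the least upper bound of the finite family `f`. -/
def isJoinFin {m : ℕ} (f : Fin m → S) (s : S) : Prop :=
  (∀ i, nle (f i) s) ∧ ∀ c : S, (∀ i, nle (f i) c) → nle s c

/-- A Boolean inverse semigroup: a nonzero inverse semigroup with zero in which
compatible pairs have joins, multiplication distributes over binary compatible joins,
and the idempotents form a generalized Boolean algebra under the natural partial
order (meets of idempotents are automatically given by multiplication; the extra
requirement is the existence of relative complements). -/
class IsBooleanInverseSemigroup (S : Type*) [Mul S] [Zero S] [Inv S]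
    extends IsInverseSemigroup S : Prop where
  exists_ne_zero : ∃ a : S, a ≠ 0
  compat_join : ∀ a b : S, compat a b → ∃ j, isJoin a b j
  mul_join : ∀ a b j c : S, isJoin a b j → isJoin (c * a) (c * b) (c * j)
  join_mul : ∀ a b j c : S, isJoin a b j → isJoin (a * c) (b * c) (j * c)
  relcomp : ∀ e f : S, idem e → idem f → nle f e →
    ∃ g : S, idem g ∧ nle g e ∧ g * f = 0 ∧ isJoin f g e


/-- An `X × X` generalized rook matrix over `G⁰` (`G` with a zero adjoined):
finitely many nonzero entries, and any two entries in the same row (resp. column)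
lying in distinct columns (resp. rows) have orthogonal ranges (resp. domains). -/
def IsRook {X : Type*} {G : Type*} [Group G] (M : X → X → WithZero G) : Prop :=
  Set.Finite {p : X × X | M p.1 p.2 ≠ 0} ∧
  (∀ i j k : X, j ≠ k → (M i j)⁻¹ * M i k = 0) ∧
  (∀ i j k : X, i ≠ j → M i k * (M j k)⁻¹ = 0)

open Classical in
/-- The product of rook matrices: `(A B)_{i j} = ⊕ₖ A_{i k} B_{k j}` (for rook
matrices, at most one summand is nonzero). -/
noncomputable def rookMul {X : Type*} {G : Type*} [Group G]
    (A B : X → X → WithZero G) : X → X → WithZero G := fun i j =>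
  if h : ∃ k, A i k * B k j ≠ 0 then A i h.choose * B h.choose j else 0

section Aux

variable {S : Type*} [Mul S] [Zero S] [Inv S]

theorem ma [IsInverseSemigroup S] (a b c : S) : a * b * c = a * (b * c) :=
  IsInverseSemigroup.mul_assoc a b c

instance assocInst [IsInverseSemigroup S] : Std.Associative (α := S) (· * ·) := ⟨ma⟩

theorem aia [IsInverseSemigroup S] (a : S) : a * a⁻¹ * a = a := IsInverseSemigroup.mul_inv_mul a
theorem iai [IsInverseSemigroup S] (a : S) : a⁻¹ * a * a⁻¹ = a⁻¹ := IsInverseSemigroup.inv_mul_inv a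
theorem iu [IsInverseSemigroup S] (a b : S) (h : a * b * a = a) (h' : b * a * b = b) : b = a⁻¹ :=
  IsInverseSemigroup.inv_unique a b h h'
theorem zm [IsInverseSemigroup S] (a : S) : 0 * a = 0 := IsInverseSemigroup.zero_mul a
theorem mz [IsInverseSemigroup S] (a : S) : a * 0 = 0 := IsInverseSemigroup.mul_zero a

theorem ii [IsInverseSemigroup S] (a : S) : a⁻¹⁻¹ = a := (iu _ _ (iai a) (aia a)).symm

theorem idi [IsInverseSemigroup S] {e : S} (h : e * e = e) : e⁻¹ = e :=
  (iu e e (by rw [h, h]) (by rw [h, h])).symm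

theorem id_mul [IsInverseSemigroup S] {e f : S} (he : e * e = e) (hf : f * f = f) :
    (e * f) * (e * f) = e * f := by
  have h1 := aia (e * f)
  have h2 := iai (e * f)
  have hx : f * (e * f)⁻¹ * e = (e * f)⁻¹ := by
    apply iu <;> grind
  have hxx : (e * f)⁻¹ * (e * f)⁻¹ = (e * f)⁻¹ := by grind
  have := idi hxx
  rw [ii] at this
  rw [this]; rw [← this]; rw [this, hxx]

theorem id_comm [IsInverseSemigroup S] {e f : S} (he : e * e = e) (hf : f * f = f) :
    e * f = f * e := by
  have h1 := id_mul he hf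
  have h2 := id_mul hf he
  have := idi h1
  rw [← this]
  symm
  apply iu <;> grind

theorem dd [IsInverseSemigroup S] (a : S) : (a⁻¹ * a) * (a⁻¹ * a) = a⁻¹ * a := by
  rw [← ma, iai]
theorem rr [IsInverseSemigroup S] (a : S) : (a * a⁻¹) * (a * a⁻¹) = a * a⁻¹ := by
  rw [← ma, aia]

theorem mi [IsInverseSemigroup S] (a b : S) : (a * b)⁻¹ = b⁻¹ * a⁻¹ := by
  have h1 := id_comm (dd a) (rr b)
  have h2 := aia a
  have h3 := iai a
  have h4 := aia b
  have h5 := iai b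
  symm
  apply iu
  · calc a * b * (b⁻¹ * a⁻¹) * (a * b) = a * ((b * b⁻¹) * (a⁻¹ * a)) * b := by simp only [ma]
      _ = a * ((a⁻¹ * a) * (b * b⁻¹)) * b := by rw [h1]
      _ = (a * a⁻¹ * a) * (b * b⁻¹ * b) := by simp only [ma]
      _ = _ := by rw [h2, h4]
  · calc b⁻¹ * a⁻¹ * (a * b) * (b⁻¹ * a⁻¹) = b⁻¹ * ((a⁻¹ * a) * (b * b⁻¹)) * a⁻¹ := by simp only [ma]
      _ = b⁻¹ * ((b * b⁻¹) * (a⁻¹ * a)) * a⁻¹ := by rw [h1]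
      _ = (b⁻¹ * b * b⁻¹) * (a⁻¹ * a * a⁻¹) := by simp only [ma]
      _ = _ := by rw [h3, h5]

theorem iz [IsInverseSemigroup S] : (0 : S)⁻¹ = 0 := idi (zm 0)

theorem inv_inj' [IsInverseSemigroup S] {a b : S} (h : a⁻¹ = b⁻¹) : a = b := by
  rw [← ii a, h, ii]

theorem nle_antisymm [IsInverseSemigroup S] {a b : S} (h : nle a b) (h' : nle b a) : a = b := by
  unfold nle at h h'
  have h1 := id_comm (dd a) (dd b)
  have h2 := aia b
  have : a * (b⁻¹ * b) = a := by
    calc a * (b⁻¹ * b) = b * a⁻¹ * a * (b⁻¹ * b) := by rw [← h]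
      _ = b * ((a⁻¹ * a) * (b⁻¹ * b)) := by simp only [ma]
      _ = (b * b⁻¹ * b) * (a⁻¹ * a) := by rw [h1]; simp only [ma]
      _ = a := by rw [h2, ← ma, ← h]
  rw [← ma, ← h'] at this
  exact this.symm

theorem join_unique [IsInverseSemigroup S] {a b j k : S} (h : isJoin a b j) (h' : isJoin a b k) :
    j = k :=
  nle_antisymm (h.2.2 _ h'.1 h'.2.1) (h'.2.2 _ h.1 h.2.1)

theorem nle_refl [IsInverseSemigroup S] (a : S) : nle a a := (aia a).symm
theorem nle_zero [IsInverseSemigroup S] (a : S) : nle 0 a := (mz _).symm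

theorem join_zero [IsInverseSemigroup S] (a : S) : isJoin a 0 a :=
  ⟨nle_refl a, nle_zero a, fun _ h _ => h⟩
theorem zero_join [IsInverseSemigroup S] (a : S) : isJoin 0 a a :=
  ⟨nle_zero a, nle_refl a, fun _ _ h => h⟩

def PA (e : S) : Prop := e * e = e ∧ e ≠ 0 ∧ ∀ f : S, f * f = f → e * f = 0 ∨ e * f = e

theorem ext_left [IsBooleanInverseSemigroup S] [Finite S] {a b : S}
    (h : ∀ e : S, PA e → e * a = e * b) : ∀ f : S, f * f = f → f * a = f * b := by
  let r : S → S → Prop := fun x y => x * x = x ∧ y * y = y ∧ y * x = x ∧ x ≠ y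
  have : IsTrans S r := ⟨by
    rintro x y z ⟨hx, hy, hyx, hne⟩ ⟨-, hz, hzy, hne'⟩
    refine ⟨hx, hz, by rw [← hyx, ← ma, hzy], ?_⟩
    rintro rfl
    exact hne (by rw [← hyx, id_comm hy hx, hzy])⟩
  have : Std.Irrefl r := ⟨fun x hx => hx.2.2.2 rfl⟩
  have wf : WellFounded r := Finite.wellFounded_of_trans_of_irrefl r
  intro f
  induction f using wf.induction with
  | _ f ih =>
  intro hf
  by_cases h0 : f = 0
  · rw [h0, zm, zm]
  by_cases hP : PA f
  · exact h f hP
  simp only [PA, not_and, not_forall, not_or] at hP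
  obtain ⟨g', hg', h1, h2⟩ := hP hf h0
  have hg := id_mul hf hg'
  generalize hgg : f * g' = g at *
  have hfg : f * g = g := by rw [← hgg, ← ma, hf]
  obtain ⟨k, hk, hkf, hkg, hj⟩ := IsBooleanInverseSemigroup.relcomp f g hf hg
    (by unfold nle; rw [idi hg, ma, hg, hfg])
  have hfk : f * k = k := by
    unfold nle at hkf; unfold idem at hk; rw [idi hk, ma, hk] at hkf; exact hkf.symm
  have hkne : k ≠ f := by rintro rfl; exact h1 (by rw [← hfg, hkg])
  have e1 := ih g ⟨hg, hf, hfg, h2⟩ hg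
  have e2 := ih k ⟨hk, hf, hfk, hkne⟩ hk
  have j1 := IsBooleanInverseSemigroup.join_mul _ _ _ a hj
  have j2 := IsBooleanInverseSemigroup.join_mul _ _ _ b hj
  rw [e1, e2] at j1
  exact join_unique j1 j2

theorem ext_one [IsBooleanInverseSemigroup S] [Finite S] [One S]
    (hone : ∀ a : S, 1 * a = a ∧ a * 1 = a) {a b : S}
    (h : ∀ e : S, PA e → e * a = e * b) : a = b := by
  have := ext_left h 1 (hone 1).1
  rwa [(hone a).1, (hone b).1] at this

theorem ext_one' [IsBooleanInverseSemigroup S] [Finite S] [One S]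
    (hone : ∀ a : S, 1 * a = a ∧ a * 1 = a) {a b : S}
    (h : ∀ e : S, PA e → a * e = b * e) : a = b := by
  apply inv_inj'
  apply ext_one hone
  intro e he
  apply inv_inj'
  rw [mi, mi, ii, ii, idi he.1, h e he]

/-- range atom gives domain atom -/
theorem dom_atom [IsInverseSemigroup S] {x : S} (h : PA (x * x⁻¹)) : PA (x⁻¹ * x) := by
  refine ⟨dd x, ?_, ?_⟩
  · intro h0
    apply h.2.1
    rw [← aia x, ma x, h0, mz, zm]
  · intro f hf
    have hi : (x * f * x⁻¹) * (x * f * x⁻¹) = x * f * x⁻¹ := by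
      calc _ = x * (f * (x⁻¹ * x)) * (f * x⁻¹) := by simp only [ma]
        _ = (x * x⁻¹ * x) * (f * f) * x⁻¹ := by rw [id_comm hf (dd x)]; simp only [ma]
        _ = _ := by rw [aia, hf]
    have key : x⁻¹ * (x * x⁻¹ * (x * f * x⁻¹)) * x = x⁻¹ * x * f := by
      calc _ = (x⁻¹ * x * x⁻¹) * x * (f * (x⁻¹ * x)) := by simp only [ma]
        _ = (x⁻¹ * x * x⁻¹) * x * x⁻¹ * x * f := by rw [id_comm hf (dd x)]; simp only [ma]
        _ = _ := by rw [iai, iai]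
    rcases h.2.2 _ hi with h1 | h1
    · left; rw [← key, h1, mz, zm]
    · right; rw [← key, h1, ← ma, iai]

theorem ran_eq [IsInverseSemigroup S] {b x : S} (hb : PA b) (h : b * x = x) (h0 : x ≠ 0) :
    x * x⁻¹ = b := by
  rcases hb.2.2 _ (rr x) with h1 | h1
  · rw [← ma, h] at h1
    exact absurd (by rw [← aia x, h1, zm]) h0
  · rw [← ma, h] at h1; exact h1

theorem dom_eq [IsInverseSemigroup S] {b x f : S} (hb : PA b) (h : b * x = x) (hf : PA f)
    (h0 : x * f ≠ 0) : x⁻¹ * x = f := by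
  have hx : x ≠ 0 := by rintro rfl; exact h0 (zm f)
  have hd : PA (x⁻¹ * x) := dom_atom (by rw [ran_eq hb h hx]; exact hb)
  have hne : x⁻¹ * x * f ≠ 0 := by
    intro h1
    apply h0
    rw [← aia x, ma x, ma x, h1, mz]
  have h1 := (hd.2.2 f hf.1).resolve_left hne
  rw [id_comm hd.1 hf.1] at hne h1
  rw [← h1]
  exact (hf.2.2 _ hd.1).resolve_left hne

theorem mul_atom [IsInverseSemigroup S] {b x f : S} (hb : PA b) (h : b * x = x) (hf : PA f)
    (h0 : x * f ≠ 0) : x * f = x := by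
  rw [← dom_eq hb h hf h0, ← ma, aia]

end Aux

section Aux2

variable {S : Type*} [Mul S] [Zero S] [Inv S]

/-- The maximal subgroup at the idempotent `e`. -/
abbrev Hc (e : S) : Type _ := {g : S // e * g = g ∧ g * g⁻¹ = e ∧ g⁻¹ * g = e}

theorem inv_fix [IsInverseSemigroup S] {b x : S} (h : x⁻¹ * x = b) : b * x⁻¹ = x⁻¹ := by
  rw [← h, iai]

theorem exists_group [IsInverseSemigroup S] [Finite S] {b : S} (hb : PA b) :
    ∃ (G : Type) (_ : Group G) (_ : Finite G) (v : WithZero G → S),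
      Function.Injective v ∧ (∀ x y, v (x * y) = v x * v y) ∧ v 0 = 0 ∧
      (∀ s, b * s * b = s → ∃ x, v x = s) ∧ ∀ x, b * v x * b = v x := by
  have hbi := idi hb.1
  let mulI : Mul (Hc b) := ⟨fun x y => ⟨x.1 * y.1, by rw [← ma, x.2.1], by
    rw [mi, ma, ← ma y.1, y.2.2.1, inv_fix x.2.2.2, x.2.2.1], by
    rw [mi, ma, ← ma x.1⁻¹, x.2.2.2, y.2.1, y.2.2.2]⟩⟩
  let oneI : One (Hc b) := ⟨⟨b, hb.1, by rw [hbi, hb.1], by rw [hbi, hb.1]⟩⟩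
  let invI : Inv (Hc b) := ⟨fun x => ⟨x.1⁻¹, inv_fix x.2.2.2, by rw [ii, x.2.2.2],
    by rw [ii, x.2.2.1]⟩⟩
  let grp : Group (Hc b) := Group.ofLeftAxioms
    (fun x y z => Subtype.ext (ma x.1 y.1 z.1)) (fun x => Subtype.ext x.2.1)
    (fun x => Subtype.ext x.2.2.2)
  have : Finite (Hc b) := Subtype.finite
  let u : Shrink.{0} (Hc b) → S := fun g => ((equivShrink.{0} (Hc b)).symm g).1
  have hu : Function.Injective u := fun x y h => (equivShrink.{0} (Hc b)).symm.injective (Subtype.ext h)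
  have hum : ∀ x y, u (x * y) = u x * u y := fun x y => by
    show ((equivShrink.{0} (Hc b)).symm (x * y)).1 = _
    rw [equivShrink_symm_mul]; rfl
  have hun : ∀ x, u x ≠ 0 := by
    intro x h
    have := ((equivShrink.{0} (Hc b)).symm x).2.2.1
    change u x * (u x)⁻¹ = b at this
    rw [h, zm] at this
    exact hb.2.1 this.symm
  have hub : ∀ x, b * u x * b = u x := by
    intro x
    have h1 := ((equivShrink.{0} (Hc b)).symm x).2.1
    have h2 := ((equivShrink.{0} (Hc b)).symm x).2.2.2
    change b * u x = u x at h1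
    change (u x)⁻¹ * u x = b at h2
    rw [h1]
    conv_lhs => rw [← h2, ← ma, aia]
  have hus : ∀ s, s ≠ 0 → b * s * b = s → ∃ x, u x = s := by
    intro s h0 h
    have h1 : b * s = s := by rw [← h, ← ma, ← ma, hb.1]
    have h2 : s * b = s := by rw [← h, ma, hb.1]
    refine ⟨equivShrink.{0} (Hc b) ⟨s, h1, ran_eq hb h1 h0, dom_eq hb h1 hb (by rwa [h2])⟩, ?_⟩
    show ((equivShrink.{0} (Hc b)).symm _).1 = _
    rw [Equiv.symm_apply_apply]
  refine ⟨Shrink.{0} (Hc b), inferInstance, inferInstance,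
    fun x => WithZero.recZeroCoe (0 : S) u x, ?_, ?_, rfl, ?_, ?_⟩
  · intro x y h
    induction x using WithZero.recZeroCoe <;> induction y using WithZero.recZeroCoe
    · rfl
    · exact absurd h.symm (hun _)
    · exact absurd h (hun _)
    · exact congrArg _ (hu h)
  · intro x y
    induction x using WithZero.recZeroCoe <;> induction y using WithZero.recZeroCoe
    · exact (mz _).symm
    · exact (zm _).symm
    · exact (mz _).symm
    · exact hum _ _
  · intro s hs
    by_cases h0 : s = 0
    · exact ⟨0, h0.symm⟩
    · obtain ⟨x, hx⟩ := hus s h0 hs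
      exact ⟨((x : Shrink.{0} (Hc b)) : WithZero (Shrink.{0} (Hc b))), hx⟩
  · intro x
    induction x using WithZero.recZeroCoe
    · show b * 0 * b = 0
      rw [mz, zm]
    · exact hub _

theorem exists_frame [IsInverseSemigroup S] [Finite S] :
    ∃ (r : ℕ) (n : Fin r → ℕ) (b : Fin r → S) (t : ∀ i, Fin (n i) → S),
      (∀ i, PA (b i)) ∧ (∀ i j, (t i j)⁻¹ * t i j = b i) ∧
      (∀ i j, PA (t i j * (t i j)⁻¹)) ∧
      (∀ e : S, PA e → ∃ i j, t i j * (t i j)⁻¹ = e) ∧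
      (∀ i j i' j' x, x * x⁻¹ = t i j * (t i j)⁻¹ → x⁻¹ * x = t i' j' * (t i' j')⁻¹ → i = i') ∧
      (∀ i j j', t i j * (t i j)⁻¹ = t i j' * (t i j')⁻¹ → j = j') := by
  let sd : Setoid {e : S // PA e} :=
    { r := fun e f => ∃ x : S, x * x⁻¹ = e.1 ∧ x⁻¹ * x = f.1
      iseqv := 
      { refl := fun e => ⟨e.1, by rw [idi e.2.1, e.2.1], by rw [idi e.2.1, e.2.1]⟩
        symm := fun {e f} ⟨x, h1, h2⟩ => ⟨x⁻¹, by rw [ii, h2], by rw [ii, h1]⟩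
        trans := fun {e f g} ⟨x, h1, h2⟩ ⟨y, h3, h4⟩ => ⟨x * y, by
          rw [mi, ma, ← ma y, h3, ← h2, iai, h1], by
          rw [mi, ma, ← ma x⁻¹, h2, ← h3, aia, h4]⟩ } }
  let Q := Quotient sd
  let φ : Q ≃ Fin (Nat.card Q) := Finite.equivFin Q
  let X : Q → Type _ := fun q => {e : {e : S // PA e} // Quotient.mk sd e = q}
  let ψ : ∀ q, X q ≃ Fin (Nat.card (X q)) := fun q => Finite.equivFin (X q)
  have hx : ∀ (q : Q) (e : X q), ∃ x : S, x * x⁻¹ = e.1.1 ∧ x⁻¹ * x = q.out.1 := by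
    intro q e
    have : sd.r e.1 q.out := Quotient.exact (e.2.trans q.out_eq.symm)
    exact this
  choose T hT1 hT2 using hx
  refine ⟨Nat.card Q, fun i => Nat.card (X (φ.symm i)), fun i => (φ.symm i).out.1,
    fun i j => T (φ.symm i) ((ψ _).symm j), fun i => (φ.symm i).out.2, fun i j => hT2 _ _, 
    fun i j => by rw [hT1]; exact ((ψ _).symm j).1.2, ?_, ?_, ?_⟩
  · intro e he
    obtain ⟨i, hi⟩ := φ.symm.surjective (Quotient.mk sd ⟨e, he⟩)
    refine ⟨i, ψ _ ⟨⟨e, he⟩, hi.symm⟩, ?_⟩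
    rw [hT1, Equiv.symm_apply_apply]
  · intro i j i' j' x h1 h2
    rw [hT1] at h1 h2
    apply φ.symm.injective
    rw [← ((ψ _).symm j).2, ← ((ψ _).symm j').2]
    exact Quotient.sound ⟨x, h1, h2⟩
  · intro i j j' h
    rw [hT1, hT1] at h
    exact (ψ _).symm.injective (Subtype.ext (Subtype.ext h))

/-- Gluing. -/
theorem glue [IsBooleanInverseSemigroup S] [Finite S] [One S]
    (hone : ∀ a : S, 1 * a = a ∧ a * 1 = a) (m : S → S → S)
    (hm : ∀ e f, PA e → PA f → e * m e f * f = m e f)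
    (h1 : ∀ e f f', PA e → PA f → PA f' → m e f ≠ 0 → m e f' ≠ 0 → f = f')
    (h2 : ∀ e e' f, PA e → PA e' → PA f → m e f ≠ 0 → m e' f ≠ 0 → e = e') :
    ∃ a : S, ∀ e f, PA e → PA f → e * a * f = m e f := by
  classical
  have orthA : ∀ e f : S, PA e → PA f → e ≠ f → e * f = 0 := by
    intro e f he hf hne
    rcases he.2.2 f hf.1 with h | h
    · exact h
    rcases hf.2.2 e he.1 with h' | h'
    · rw [id_comm he.1 hf.1]; exact h'
    · exact absurd (by rw [← h, id_comm he.1 hf.1, h']) hne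
  have main : ∀ P : Finset (S × S), ∃ a : S, ∀ e f, PA e → PA f →
      e * a * f = if (e, f) ∈ P then m e f else 0 := by
    intro P
    induction P using Finset.induction_on with
    | empty => exact ⟨0, fun e f _ _ => by simp [mz, zm]⟩
    | insert p P hp ih =>
    obtain ⟨a, ha⟩ := ih
    obtain ⟨e0, f0⟩ := p
    by_cases hz : PA e0 ∧ PA f0 ∧ m e0 f0 ≠ 0
    swap
    · refine ⟨a, fun e f he hf => ?_⟩
      rw [ha e f he hf]
      by_cases hef : (e, f) = (e0, f0)
      · obtain ⟨rfl, rfl⟩ := Prod.mk.inj hef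
        have : m e f = 0 := by
          by_contra h
          exact hz ⟨he, hf, h⟩
        simp [this]
      · simp only [Finset.mem_insert, hef, false_or]
    obtain ⟨he0, hf0, hm0⟩ := hz
    have hmm := hm e0 f0 he0 hf0
    have z1 : e0 * a = 0 := by
      apply ext_one' hone
      intro f hf
      rw [zm, ha e0 f he0 hf]
      split_ifs with h
      · by_contra h'
        have := h1 e0 f f0 he0 hf hf0 h' hm0
        subst this
        exact hp h
      · rfl
    have z2 : a * f0 = 0 := by
      apply ext_one hone
      intro e he
      rw [mz, ← ma, ha e f0 he hf0]
      split_ifs with h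
      · by_contra h'
        have := h2 e e0 f0 he he0 hf0 h' hm0
        subst this
        exact hp h
      · rfl
    have z1' : a⁻¹ * e0 = 0 := by
      have := congrArg (·⁻¹) z1
      simpa only [mi, iz, idi he0.1] using this
    have c1 : a⁻¹ * m e0 f0 = 0 := by
      rw [← hmm, ← ma, ← ma, z1', zm, zm]
    have c2 : a * (m e0 f0)⁻¹ = 0 := by
      rw [← hmm, mi, idi hf0.1, ← ma, z2, zm]
    obtain ⟨j, hj⟩ := IsBooleanInverseSemigroup.compat_join a (m e0 f0)
      ⟨by rw [c1]; exact zm 0, by rw [c2]; exact zm 0⟩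
    refine ⟨j, fun e f he hf => ?_⟩
    have hj' := IsBooleanInverseSemigroup.join_mul _ _ _ f
      (IsBooleanInverseSemigroup.mul_join _ _ _ e hj)
    rw [ha e f he hf] at hj'
    by_cases hef : (e, f) = (e0, f0)
    · obtain ⟨rfl, rfl⟩ := Prod.mk.inj hef
      rw [if_neg hp, hmm] at hj'
      rw [if_pos (Finset.mem_insert_self _ _)]
      exact join_unique hj' (zero_join _)
    · have : e * m e0 f0 * f = 0 := by
        by_cases hee : e = e0
        · have hff : f ≠ f0 := fun h => hef (by rw [hee, h])
          rw [← hmm, ma, ma, ma, orthA f0 f hf0 hf hff.symm, mz, mz, mz]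
        · rw [← hmm, ← ma, ← ma, orthA e e0 he he0 hee, zm, zm, zm]
      rw [this] at hj'
      rw [join_unique hj' (join_zero _)]
      simp only [Finset.mem_insert, hef, false_or]
  have := Fintype.ofFinite S
  obtain ⟨a, ha⟩ := main Finset.univ
  exact ⟨a, fun e f he hf => by rw [ha e f he hf, if_pos (Finset.mem_univ _)]⟩

end Aux2

/-- Every finite Boolean inverse monoid is isomorphic to a finite direct product
`M_{n₁}(G₁⁰) × ⋯ × M_{n_r}(G_r⁰)` of Boolean inverse monoids of generalized rook
matrices over finite groups with zero adjoined. -/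
theorem finite_boolean_inverse_monoid_structure (S : Type*)
    [Mul S] [Zero S] [Inv S] [One S] [IsBooleanInverseSemigroup S] [Finite S]
    (hone : ∀ a : S, 1 * a = a ∧ a * 1 = a) :
    ∃ (r : ℕ) (G : Fin r → Type) (_ : ∀ i, Group (G i)) (_ : ∀ i, Finite (G i))
      (n : Fin r → ℕ)
      (Φ : S → ∀ i : Fin r, {M : Fin (n i) → Fin (n i) → WithZero (G i) // IsRook M}),
      Function.Bijective Φ ∧
      ∀ a b : S, ∀ i : Fin r, (Φ (a * b) i).val = rookMul (Φ a i).val (Φ b i).val := by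
  classical
  obtain ⟨r, n, b, t, hb, ht, hp, hsurj, hcls, hinj⟩ := exists_frame (S := S)
  choose G gI fI v vinj vmul vzero vsurj vb using fun i => exists_group (hb i)
  have tb : ∀ i j, t i j * b i = t i j := fun i j => by rw [← ht i j, ← ma, aia]
  have bt : ∀ i j, b i * (t i j)⁻¹ = (t i j)⁻¹ := fun i j => inv_fix (ht i j)
  have bx : ∀ i j (a : S), b i * ((t i j)⁻¹ * a) = (t i j)⁻¹ * a := fun i j a => by
    rw [← ma, bt]
  -- entry function
  have hent : ∀ (a : S) (i : Fin r) (j k : Fin (n i)), ∃ x, v i x = (t i j)⁻¹ * a * t i k := by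
    intro a i j k
    apply vsurj
    rw [ma, ma ((t i j)⁻¹ * a), tb, ma, bx]
  choose F hF using hent
  have t0 : ∀ i j (x : S), x * t i j ≠ 0 ↔ x * (t i j * (t i j)⁻¹) ≠ 0 := by
    intro i j x
    apply not_congr
    constructor
    · intro h; rw [← ma, h, zm]
    · intro h; rw [← aia (t i j), ← ma, h, zm]
  have vne : ∀ i x, v i x ≠ 0 ↔ x ≠ 0 := by
    intro i x
    apply not_congr
    constructor
    · intro h; exact vinj i (by rw [h, vzero])
    · rintro rfl; exact vzero i
  -- row and column uniqueness
  have hrow : ∀ (a : S) i j k k', F a i j k ≠ 0 → F a i j k' ≠ 0 → k = k' := by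
    intro a i j k k' h h'
    rw [← vne, hF, t0] at h h'
    apply hinj i
    rw [← dom_eq (hb i) (bx i j a) (hp i k) h, dom_eq (hb i) (bx i j a) (hp i k') h']
  have hFi : ∀ (a : S) i j k, F a i j k ≠ 0 → F a⁻¹ i k j ≠ 0 := by
    intro a i j k h
    rw [← vne, hF] at h ⊢
    intro h'
    apply h
    have := congrArg (·⁻¹) h'
    simpa only [mi, iz, ii, ma] using this
  have hcol : ∀ (a : S) i j j' k, F a i j k ≠ 0 → F a i j' k ≠ 0 → j = j' := by
    intro a i j j' k h h'
    exact hrow a⁻¹ i k j j' (hFi _ _ _ _ h) (hFi _ _ _ _ h')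
  have hrook : ∀ a i, IsRook (F a i) := by
    intro a i
    refine ⟨Set.toFinite _, ?_, ?_⟩
    · intro j k k' hne
      by_contra h
      have h' := mul_ne_zero_iff.1 h
      exact hne (hrow a i j k k' (fun h0 => h'.1 (by rw [h0, inv_zero])) h'.2)
    · intro j j' k hne
      by_contra h
      have h' := mul_ne_zero_iff.1 h
      exact hne (hcol a i j j' k h'.1 (fun h0 => h'.2 (by rw [h0, inv_zero])))
  refine ⟨r, G, gI, fI, n, fun a i => ⟨F a i, hrook a i⟩, ⟨?_, ?_⟩, ?_⟩
  · intro a c hac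
    have hac' : ∀ i j k, F a i j k = F c i j k := by
      intro i j k
      have := congrArg Subtype.val (congrFun hac i)
      exact congrFun (congrFun this j) k
    apply ext_one hone
    intro e he
    apply ext_one' hone
    intro f hf
    obtain ⟨i, j, rfl⟩ := hsurj e he
    obtain ⟨i', j', rfl⟩ := hsurj f hf
    by_cases hi : i = i'
    · subst hi
      have := congrArg (v i) (hac' i j j')
      rw [hF, hF] at this
      calc _ = t i j * ((t i j)⁻¹ * a * t i j') * (t i j')⁻¹ := by simp only [ma]
        _ = _ := by rw [this]; simp only [ma]
    · have key : ∀ a : S, t i j * (t i j)⁻¹ * a * (t i' j' * (t i' j')⁻¹) = 0 := by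
        intro a
        by_contra h
        have hbx : t i j * (t i j)⁻¹ * (t i j * (t i j)⁻¹ * a) = t i j * (t i j)⁻¹ * a := by
          rw [← ma, rr]
        have h0 : t i j * (t i j)⁻¹ * a ≠ 0 := fun h0 => h (by rw [h0, zm])
        exact hi (hcls i j i' j' _ (ran_eq he hbx h0) (dom_eq he hbx hf h))
      rw [key, key]
  · intro M
    have hM1 : ∀ i j k k', (M i).1 j k ≠ 0 → (M i).1 j k' ≠ 0 → k = k' := by
      intro i j k k' h h'
      by_contra hne
      exact mul_ne_zero (inv_ne_zero h) h' ((M i).2.2.1 j k k' hne)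
    have hM2 : ∀ i j j' k, (M i).1 j k ≠ 0 → (M i).1 j' k ≠ 0 → j = j' := by
      intro i j j' k h h'
      by_contra hne
      exact mul_ne_zero h (inv_ne_zero h') ((M i).2.2.2 j j' k hne)
    have hpinj : ∀ i j i' j', t i j * (t i j)⁻¹ = t i' j' * (t i' j')⁻¹ → i = i' := by
      intro i j i' j' h
      refine hcls i j i' j' (t i j * (t i j)⁻¹) ?_ ?_
      · rw [idi (rr _), rr]
      · rw [idi (rr _), rr, h]
    -- the S-valued matrix
    have hm : ∀ e f : S, ∃ s : S, (∀ i j k, t i j * (t i j)⁻¹ = e → t i k * (t i k)⁻¹ = f →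
        s = t i j * v i ((M i).1 j k) * (t i k)⁻¹) ∧
        (s ≠ 0 → ∃ i j k, t i j * (t i j)⁻¹ = e ∧ t i k * (t i k)⁻¹ = f ∧ (M i).1 j k ≠ 0) := by
      intro e f
      by_cases h : ∃ i j k, t i j * (t i j)⁻¹ = e ∧ t i k * (t i k)⁻¹ = f
      · obtain ⟨i, j, k, rfl, rfl⟩ := h
        refine ⟨t i j * v i ((M i).1 j k) * (t i k)⁻¹, ?_, ?_⟩
        · intro i' j' k' h1 h2
          have := hpinj _ _ _ _ h1
          subst this
          have := hinj _ _ _ h1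
          have := hinj _ _ _ h2
          subst_vars
          rfl
        · intro h
          refine ⟨i, j, k, rfl, rfl, fun h0 => h ?_⟩
          rw [h0, vzero, mz, zm]
      · refine ⟨0, fun i j k h1 h2 => absurd ⟨i, j, k, h1, h2⟩ h, fun h => absurd rfl h⟩
    choose m hm1 hm2 using hm
    obtain ⟨a, ha⟩ := glue hone m (by
        intro e f he hf
        by_cases h : m e f = 0
        · rw [h, mz, zm]
        · obtain ⟨i, j, k, rfl, rfl, -⟩ := hm2 e f h
          rw [hm1 _ _ i j k rfl rfl]
          calc _ = (t i j * (t i j)⁻¹ * t i j) * v i ((M i).1 j k) *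
                ((t i k)⁻¹ * t i k * (t i k)⁻¹) := by simp only [ma]
            _ = _ := by rw [aia, iai]) (by
        intro e f f' _ _ _ h h'
        obtain ⟨i, j, k, rfl, rfl, h1⟩ := hm2 e f h
        obtain ⟨i', j', k', h2, rfl, h3⟩ := hm2 _ f' h'
        have := hpinj _ _ _ _ h2
        subst this
        have := hinj _ _ _ h2
        subst this
        rw [hM1 _ _ _ _ h1 h3]) (by
        intro e e' f _ _ _ h h'
        obtain ⟨i, j, k, rfl, rfl, h1⟩ := hm2 e f h
        obtain ⟨i', j', k', rfl, h2, h3⟩ := hm2 e' _ h'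
        have := hpinj _ _ _ _ h2
        subst this
        have := hinj _ _ _ h2
        subst this
        rw [hM2 _ _ _ _ h1 h3])
    refine ⟨a, funext fun i => Subtype.ext (funext fun j => funext fun k => vinj i ?_)⟩
    show v i (F a i j k) = _
    rw [hF]
    have h := ha _ _ (hp i j) (hp i k)
    rw [hm1 _ _ i j k rfl rfl] at h
    calc (t i j)⁻¹ * a * t i k
        = ((t i j)⁻¹ * t i j * (t i j)⁻¹) * a * (t i k * (t i k)⁻¹ * t i k) := by rw [iai, aia]
      _ = (t i j)⁻¹ * (t i j * (t i j)⁻¹ * a * (t i k * (t i k)⁻¹)) * t i k := by simp only [ma]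
      _ = ((t i j)⁻¹ * t i j) * v i ((M i).1 j k) * ((t i k)⁻¹ * t i k) := by
          rw [h]; simp only [ma]
      _ = _ := by rw [ht, ht, vb]
  · intro a c i
    funext j k
    apply vinj i
    show v i (F (a * c) i j k) = v i (rookMul (F a i) (F c i) j k)
    have hprod : ∀ l, v i (F a i j l * F c i l k) =
        (t i j)⁻¹ * a * (t i l * (t i l)⁻¹) * (c * t i k) := by
      intro l
      rw [vmul, hF, hF]; simp only [ma]
    have hac : v i (F (a * c) i j k) = (t i j)⁻¹ * a * (c * t i k) := by
      rw [hF]; simp only [ma]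
    unfold rookMul
    split_ifs with h
    · have h' := h.choose_spec
      rw [hprod, hac]
      rw [← vne, hprod] at h'
      rw [mul_atom (hb i) (bx i j a) (hp i _) (fun h0 => h' (by rw [h0, zm]))]
    · rw [vzero, hac]
      by_contra h0
      apply h
      have hx : (t i j)⁻¹ * a ≠ 0 := fun h1 => h0 (by rw [h1, zm])
      have hran := ran_eq (hb i) (bx i j a) hx
      have hat := dom_atom (x := (t i j)⁻¹ * a) (by rw [hran]; exact hb i)
      obtain ⟨i', l, hl⟩ := hsurj _ hat
      have hi : i = i' := by
        refine hcls i j i' l (t i j * ((t i j)⁻¹ * a)) ?_ ?_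
        · rw [mi, ma, ← ma ((t i j)⁻¹ * a), hran, bt]
        · rw [hl, mi, ma, ← ma (t i j)⁻¹ (t i j), ht, bx]
      subst hi
      refine ⟨l, ?_⟩
      rw [← vne, hprod, hl, ← ma ((t i j)⁻¹ * a), aia]
      exact h0

end Paper
end

section
/- (Dichotomy theorem) Let S be a 0-simplifying Boolean inverse semigroup. Then exactly one of the following holds: (1) S is atomless; (2) S is semisimple. -/
namespace Paper

variable {S : Type*} [Mul S] [Zero S] [Inv S]

/-- An additive ideal: a nonempty two-sided semigroup ideal closed under binary
compatible joins. -/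
def isAdditiveIdeal {S : Type*} [Mul S] [Inv S] (I : Set S) : Prop :=
  I.Nonempty ∧ (∀ a ∈ I, ∀ s : S, s * a ∈ I ∧ a * s ∈ I) ∧
    (∀ a ∈ I, ∀ b ∈ I, compat a b → ∀ j : S, isJoin a b j → j ∈ I)

/-- `f ≼ e`: there is a pencil `x₁, …, xₘ` from `f` to `e`, i.e.
`f = ⋁ᵢ d(xᵢ)` and `r(xᵢ) ≤ e` for all `i`. -/
def pencilLe {S : Type*} [Mul S] [Inv S] (f e : S) : Prop :=
  ∃ (m : ℕ) (x : Fin (m + 1) → S),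
    isJoinFin (fun i => (x i)⁻¹ * x i) f ∧ ∀ i, nle (x i * (x i)⁻¹) e

/-- `S` is `0`-simplifying: it is nonzero and its only additive ideals are `{0}`
and `S`. -/
def isZeroSimplifying (S : Type*) [Mul S] [Zero S] [Inv S] : Prop :=
  (∃ a : S, a ≠ 0) ∧
    ∀ I : Set S, isAdditiveIdeal I → I = {(0 : S)} ∨ I = Set.univ

/-- `S` is fundamental: every element commuting with all idempotents is idempotent. -/
def isFundamental (S : Type*) [Mul S] : Prop :=
  ∀ a : S, (∀ e : S, idem e → a * e = e * a) → idem a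

/-- A morphism (additive homomorphism) of Boolean inverse semigroups: a semigroup
homomorphism preserving `0` and binary compatible joins. -/
def isMorphism {S : Type*} {T : Type*} [Mul S] [Zero S] [Inv S]
    [Mul T] [Zero T] [Inv T] (θ : S → T) : Prop :=
  (∀ a b : S, θ (a * b) = θ a * θ b) ∧ θ 0 = 0 ∧
    ∀ a b j : S, compat a b → isJoin a b j → isJoin (θ a) (θ b) (θ j)

section Aux
variable {S : Type*} [Mul S] [Zero S] [Inv S] [IsInverseSemigroup S]
open IsInverseSemigroup

theorem aux_idem_mul {e f : S} (he : idem e) (hf : idem f) : idem (e * f) := by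
  letI : Semigroup S := { mul_assoc := IsInverseSemigroup.mul_assoc }
  unfold idem at *
  have h1 := mul_inv_mul (e * f)
  have h2 := inv_mul_inv (e * f)
  set z := (e * f)⁻¹ with hz
  have hff : ∀ t : S, f * (f * t) = f * t := fun t => by rw [← _root_.mul_assoc, hf]
  have hee : ∀ t : S, e * (e * t) = e * t := fun t => by rw [← _root_.mul_assoc, he]
  have h2' : ∀ t : S, z * (e * (f * (z * t))) = z * t := fun t => by
    conv_rhs => rw [← h2]
    simp only [_root_.mul_assoc]
  have hzz : f * z * e = z := by
    apply IsInverseSemigroup.inv_unique (e * f)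
    · simp only [_root_.mul_assoc, hff, hee]
      simpa only [_root_.mul_assoc] using h1
    · simp only [_root_.mul_assoc, hff, hee, h2']
  have hzi : z * z = z := by
    conv_lhs => rw [← hzz]
    conv_rhs => rw [← hzz]
    simp only [_root_.mul_assoc, h2']
  have a1 : e * f = z⁻¹ := IsInverseSemigroup.inv_unique z (e * f) h2 h1
  have a2 : z = z⁻¹ := IsInverseSemigroup.inv_unique z z (by rw [hzi, hzi]) (by rw [hzi, hzi])
  rw [a1, ← a2, hzi]

theorem aux_comm {e f : S} (he : idem e) (hf : idem f) : e * f = f * e := by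
  letI : Semigroup S := { mul_assoc := IsInverseSemigroup.mul_assoc }
  have h1 := aux_idem_mul he hf
  have h2 := aux_idem_mul hf he
  unfold idem at *
  have hff : ∀ t : S, f * (f * t) = f * t := fun t => by rw [← _root_.mul_assoc, hf]
  have hee : ∀ t : S, e * (e * t) = e * t := fun t => by rw [← _root_.mul_assoc, he]
  have a1 : e * f = (e * f)⁻¹ := IsInverseSemigroup.inv_unique _ _ (by rw [h1, h1]) (by rw [h1, h1])
  have a2 : f * e = (e * f)⁻¹ := by
    apply IsInverseSemigroup.inv_unique
    · simp only [_root_.mul_assoc, hff, hee] at h1 ⊢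
      exact h1
    · simp only [_root_.mul_assoc, hff, hee] at h2 ⊢
      exact h2
  rw [a1, ← a2]

theorem aux_d (a : S) : idem (a⁻¹ * a) := by
  unfold idem
  rw [← IsInverseSemigroup.mul_assoc, inv_mul_inv]

theorem aux_r (a : S) : idem (a * a⁻¹) := by
  unfold idem
  rw [← IsInverseSemigroup.mul_assoc, mul_inv_mul]

theorem aux_inv_mul_idem (b e : S) (he : idem e) : (b * e)⁻¹ = e * b⁻¹ := by
  letI : Semigroup S := { mul_assoc := IsInverseSemigroup.mul_assoc }
  have hc := aux_comm (aux_d b) he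
  have hee : ∀ t : S, e * (e * t) = e * t := fun t => by rw [← _root_.mul_assoc, he]
  symm
  apply IsInverseSemigroup.inv_unique
  · calc b * e * (e * b⁻¹) * (b * e) = b * (e * e * (b⁻¹ * b) * e) := by
          simp only [_root_.mul_assoc]
      _ = b * b⁻¹ * b * (e * e) := by rw [he, ← hc]; simp only [_root_.mul_assoc, (show e * e = e from he)]
      _ = b * e := by rw [he, mul_inv_mul]
  · calc e * b⁻¹ * (b * e) * (e * b⁻¹) = e * ((b⁻¹ * b) * (e * e)) * b⁻¹ := by
          simp only [_root_.mul_assoc]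
      _ = (e * e) * (b⁻¹ * b * b⁻¹) := by rw [he, hc]; simp only [_root_.mul_assoc, hee]
      _ = e * b⁻¹ := by rw [he, inv_mul_inv]

theorem aux_nle_right (b e : S) (he : idem e) : nle (b * e) b := by
  letI : Semigroup S := { mul_assoc := IsInverseSemigroup.mul_assoc }
  unfold nle
  rw [aux_inv_mul_idem b e he]
  have hc := aux_comm (aux_d b) he
  symm
  calc b * (e * b⁻¹) * (b * e) = b * (e * (b⁻¹ * b) * e) := by
        simp only [_root_.mul_assoc]
    _ = b * b⁻¹ * b * (e * e) := by rw [← hc]; simp only [_root_.mul_assoc]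
    _ = b * e := by rw [he, mul_inv_mul]

theorem aux_nle_eq {a b : S} (h : nle a b) : a = b * (a⁻¹ * a) := by
  rw [← IsInverseSemigroup.mul_assoc]; exact h

theorem aux_nle_left (b e : S) (he : idem e) : nle (e * b) b := by
  letI : Semigroup S := { mul_assoc := IsInverseSemigroup.mul_assoc }
  have hc := aux_comm he (aux_r b)
  have h1 : e * b = b * (b⁻¹ * e * b) := by
    calc e * b = e * (b * b⁻¹) * b := by rw [_root_.mul_assoc, mul_inv_mul]
      _ = _ := by rw [hc]; simp only [_root_.mul_assoc]
  rw [h1]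
  apply aux_nle_right
  unfold idem
  calc b⁻¹ * e * b * (b⁻¹ * e * b) = b⁻¹ * (e * (b * b⁻¹)) * e * b := by
        simp only [_root_.mul_assoc]
    _ = (b⁻¹ * b * b⁻¹) * (e * e) * b := by rw [hc]; simp only [_root_.mul_assoc]
    _ = b⁻¹ * e * b := by rw [he, inv_mul_inv]

theorem aux_nle_eq_left {a b : S} (h : nle a b) : a = a * a⁻¹ * b := by
  letI : Semigroup S := { mul_assoc := IsInverseSemigroup.mul_assoc }
  have h1 := aux_nle_eq h
  have he := aux_d a
  generalize a⁻¹ * a = e at h1 he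
  subst h1
  rw [aux_inv_mul_idem b e he]
  have hc := aux_comm (aux_d b) he
  symm
  calc b * e * (e * b⁻¹) * b = b * ((e * e) * (b⁻¹ * b)) := by
        simp only [_root_.mul_assoc]
    _ = b * b⁻¹ * b * e := by rw [he, ← hc]; simp only [_root_.mul_assoc]
    _ = b * e := by rw [mul_inv_mul]

theorem aux_refl (a : S) : nle a a := (mul_inv_mul a).symm

theorem aux_trans {a b c : S} (h : nle a b) (h' : nle b c) : nle a c := by
  have h1 := aux_nle_eq h
  have h2 := aux_nle_eq h'
  have he := aux_idem_mul (aux_d b) (aux_d a)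
  have : a = c * (b⁻¹ * b * (a⁻¹ * a)) := by
    rw [← IsInverseSemigroup.mul_assoc, ← h2, ← h1]
  rw [this]
  exact aux_nle_right _ _ he

theorem aux_antisymm {a b : S} (h : nle a b) (h' : nle b a) : a = b := by
  have h1 := aux_nle_eq h
  have h2 := aux_nle_eq h'
  have hc := aux_comm (aux_d a) (aux_d b)
  have ha : a * (a⁻¹ * a) = a := by rw [← IsInverseSemigroup.mul_assoc, mul_inv_mul]
  have hb : b * (b⁻¹ * b) = b := by rw [← IsInverseSemigroup.mul_assoc, mul_inv_mul]
  calc a = b * (a⁻¹ * a) := h1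
    _ = a * (b⁻¹ * b) * (a⁻¹ * a) := by rw [← h2]
    _ = a * (a⁻¹ * a) * (b⁻¹ * b) := by
        rw [IsInverseSemigroup.mul_assoc, ← hc, ← IsInverseSemigroup.mul_assoc]
    _ = b := by rw [ha, ← h2]

end Aux

/-- Dichotomy theorem: a `0`-simplifying Boolean inverse semigroup is either
atomless or semisimple, and not both. -/
theorem dichotomy (S : Type*) [Mul S] [Zero S] [Inv S]
    [IsBooleanInverseSemigroup S] (h : isZeroSimplifying S) :
    Xor' (∀ a : S, ¬ isAtomElem a) (∀ a : S, {x : S | nle x a}.Finite) := by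
  classical
  have key : ∀ a : S, a ≠ 0 → {x : S | nle x a}.Finite → ∃ b : S, isAtomElem b := by
    intro a ha hfin
    letI : PartialOrder S :=
      { le := nle
        le_refl := aux_refl
        le_trans := fun _ _ _ => aux_trans
        le_antisymm := fun _ _ => aux_antisymm }
    have hfin' : {x : S | nle x a ∧ x ≠ 0}.Finite := hfin.subset fun x hx => hx.1
    obtain ⟨b, hb⟩ := hfin'.exists_minimal ⟨a, aux_refl a, ha⟩
    refine ⟨b, hb.1.2, fun x hx => ?_⟩
    by_cases hx0 : x = 0
    · exact Or.inr hx0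
    · exact Or.inl (aux_antisymm hx (hb.2 ⟨aux_trans hx hb.1.1, hx0⟩ hx))
  by_cases hat : ∃ a : S, isAtomElem a
  · right
    refine ⟨?_, fun hn => hat.elim hn⟩
    obtain ⟨p, hp⟩ := hat
    have hpf : {x : S | nle x p}.Finite :=
      (Set.toFinite {p, 0}).subset fun x hx => by simpa using hp.2 x hx
    have hI : isAdditiveIdeal {a : S | {x : S | nle x a}.Finite} := by
      refine ⟨⟨p, hpf⟩, fun a ha s => ⟨?_, ?_⟩, fun a ha b hb _ j hj => ?_⟩
      · refine (Set.Finite.image (fun y => s * y) ha).subset fun x hx => ?_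
        refine ⟨a * (x⁻¹ * x), aux_nle_right _ _ (aux_d x), ?_⟩
        have := aux_nle_eq hx
        rw [IsInverseSemigroup.mul_assoc] at this
        exact this.symm
      · refine (Set.Finite.image (fun y => y * s) ha).subset fun x hx => ?_
        refine ⟨x * x⁻¹ * a, aux_nle_left _ _ (aux_r x), ?_⟩
        have := aux_nle_eq_left hx
        rw [← IsInverseSemigroup.mul_assoc] at this
        exact this.symm
      · refine Set.Finite.of_finite_image
          (f := fun x => (a * (x⁻¹ * x), b * (x⁻¹ * x))) ((Set.Finite.prod ha hb).subset ?_) ?_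
        · rintro _ ⟨x, _, rfl⟩
          exact ⟨aux_nle_right _ _ (aux_d x), aux_nle_right _ _ (aux_d x)⟩
        · intro x hx y hy hxy
          have jx := IsBooleanInverseSemigroup.join_mul a b j (x⁻¹ * x) hj
          have jy := IsBooleanInverseSemigroup.join_mul a b j (y⁻¹ * y) hj
          rw [← aux_nle_eq hx] at jx
          rw [← aux_nle_eq hy] at jy
          simp only [Prod.mk.injEq] at hxy
          rw [hxy.1, hxy.2] at jx
          exact aux_antisymm (jx.2.2 _ jy.1 jy.2.1) (jy.2.2 _ jx.1 jx.2.1)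
    rcases h.2 _ hI with h0 | h0
    · exfalso
      have : p ∈ ({0} : Set S) := h0 ▸ hpf
      exact hp.1 this
    · intro a
      have : a ∈ {a : S | {x : S | nle x a}.Finite} := h0 ▸ Set.mem_univ a
      exact this
  · left
    refine ⟨fun a ha => hat ⟨a, ha⟩, fun hf => ?_⟩
    obtain ⟨a, ha⟩ := h.1
    exact hat (key a ha (hf a))

end Paper
end
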